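/- Fix q > 0, let Σ_n be a random permutation of [n] from the Mallows(q) distribution, let m ≥ 2 with n ≥ 2m, and let η_m = m(m−1)⋯21 be the decreasing pattern. Let W be the number of blocks of m consecutive indices α = {i, …, i+m−1} ⊆ [n] on which the values of Σ_n are decreasing, and let Y be a Poisson random variable with mean equal to E W. Then d_TV( L(W), L(Y) ) ≤ 2·(b_1 + b_2), where b_1 = n_1·q^{2·C(m,2)}/I_m(q)², b_2 = n_2·Σ_{s=1}^{m−1} q^{C(2m−s,2)}/I_{2m−s}(q), n_1 = 2mn − 3m² + m, and n_2 = 3m − 3m² − 2n + 2mn. -/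

import Mathlib

open scoped Classical
open Filter

noncomputable section

/-- `τ` occurs in `σ` at the strictly increasing positions given by `f`:
`f` is strictly increasing and `σ ∘ f` is order-isomorphic to `τ`. -/
def OccursAt {m n : ℕ} (τ : Equiv.Perm (Fin m)) (σ : Equiv.Perm (Fin n))
    (f : Fin m → Fin n) : Prop :=
  StrictMono f ∧ ∀ k l, σ (f k) < σ (f l) ↔ τ k < τ l

/-- `τ` occurs in `σ` at the set of positions `α` (listed in increasing order). -/
def OccursOn {m n : ℕ} (τ : Equiv.Perm (Fin m)) (σ : Equiv.Perm (Fin n))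
    (α : Finset (Fin n)) : Prop :=
  ∃ f : Fin m → Fin n, StrictMono f ∧ Finset.univ.image f = α ∧
    ∀ k l, σ (f k) < σ (f l) ↔ τ k < τ l

/-- `τ` occurs in `σ` at the consecutive (0-indexed) positions `i, i+1, …, i+m-1`. -/
def OccursConsec {m n : ℕ} (τ : Equiv.Perm (Fin m)) (σ : Equiv.Perm (Fin n)) (i : ℕ) : Prop :=
  ∃ h : i + m ≤ n, ∀ k l : Fin m,
    σ ⟨i + k, by have := k.isLt; omega⟩ < σ ⟨i + l, by have := l.isLt; omega⟩ ↔ τ k < τ l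

/-- The overlap count `L_s(τ)`: the number of permutations of `[2m-s]` containing
two occurrences of `τ` at index sets sharing exactly `s` elements. -/
def overlapCount {m : ℕ} (τ : Equiv.Perm (Fin m)) (s : ℕ) : ℕ :=
  Set.ncard {ρ : Equiv.Perm (Fin (2 * m - s)) |
    ∃ α β : Finset (Fin (2 * m - s)), α.card = m ∧ β.card = m ∧ (α ∩ β).card = s ∧
      OccursOn τ ρ α ∧ OccursOn τ ρ β}

/-- The sequential overlap count `L̄_s(τ)`: the number of permutations of `[2m-s]` with
occurrences of `τ` at positions `(1,…,m)` and `(m-s+1,…,2m-s)`. -/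
def seqOverlapCount {m : ℕ} (τ : Equiv.Perm (Fin m)) (s : ℕ) : ℕ :=
  Set.ncard {ρ : Equiv.Perm (Fin (2 * m - s)) |
    OccursConsec τ ρ 0 ∧ OccursConsec τ ρ (m - s)}

/-- The number of inversions of a permutation. -/
def invCount {n : ℕ} (σ : Equiv.Perm (Fin n)) : ℕ :=
  (Finset.univ.filter fun p : Fin n × Fin n => p.1 < p.2 ∧ σ p.2 < σ p.1).card

/-- The inversion polynomial `I_n(q) = ∏_{j=1}^n (1 + q + ⋯ + q^{j-1})`. -/
def invPoly (n : ℕ) (q : ℝ) : ℝ :=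
  ∏ j ∈ Finset.range n, ∑ i ∈ Finset.range (j + 1), q ^ i

/-- Probability of the event `E` under the uniform distribution on `S_n`. -/
def unifProb {n : ℕ} (E : Set (Equiv.Perm (Fin n))) : ℝ :=
  (E.ncard : ℝ) / (n.factorial : ℝ)

/-- Probability of the event `E` under the Mallows(q) distribution on `S_n`. -/
def mallowsProb {n : ℕ} (q : ℝ) (E : Set (Equiv.Perm (Fin n))) : ℝ :=
  (∑ σ ∈ Finset.univ.filter (· ∈ E), q ^ invCount σ) / invPoly n q

/-- Expectation of `X` under the uniform distribution on `S_n`. -/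
def unifExp {n : ℕ} (X : Equiv.Perm (Fin n) → ℝ) : ℝ :=
  (∑ σ : Equiv.Perm (Fin n), X σ) / (n.factorial : ℝ)

/-- Expectation of `X` under the Mallows(q) distribution on `S_n`. -/
def mallowsExp {n : ℕ} (q : ℝ) (X : Equiv.Perm (Fin n) → ℝ) : ℝ :=
  (∑ σ : Equiv.Perm (Fin n), X σ * q ^ invCount σ) / invPoly n q

/-- The Poisson(lam) probability mass function. -/
def poissonPMF (lam : ℝ) (k : ℕ) : ℝ :=
  Real.exp (-lam) * lam ^ k / (k.factorial : ℝ)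

/-- Total variation distance between the law of the ℕ-valued statistic `W` of a uniformly
random permutation of `[n]` and the Poisson(lam) distribution. -/
def dTVNatUnif {n : ℕ} (W : Equiv.Perm (Fin n) → ℕ) (lam : ℝ) : ℝ :=
  (1 / 2) * ∑' k : ℕ, |unifProb {σ | W σ = k} - poissonPMF lam k|

/-- Total variation distance between the law of the ℕ-valued statistic `W` of a Mallows(q)
random permutation of `[n]` and the Poisson(lam) distribution. -/
def dTVNatMallows {n : ℕ} (q : ℝ) (W : Equiv.Perm (Fin n) → ℕ) (lam : ℝ) : ℝ :=
  (1 / 2) * ∑' k : ℕ, |mallowsProb q {σ | W σ = k} - poissonPMF lam k|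

/-- Total variation distance between the joint law of the indicator family
`(X_α)_{α ∈ I}` of a uniformly random permutation of `[n]` and the joint law of
independent Bernoulli random variables with marginals `p`. -/
def dTVFamUnif {n : ℕ} {I : Type*} [Fintype I] [DecidableEq I]
    (X : Equiv.Perm (Fin n) → I → Prop) (p : I → ℝ) : ℝ :=
  (1 / 2) * ∑ x : I → Bool,
    |unifProb {σ | ∀ α, X σ α ↔ x α = true} - ∏ α, (if x α then p α else 1 - p α)|

/-- Total variation distance between the joint law of the indicator family
`(X_α)_{α ∈ I}` of a Mallows(q) random permutation of `[n]` and the joint law of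
independent Bernoulli random variables with marginals `p`. -/
def dTVFamMallows {n : ℕ} (q : ℝ) {I : Type*} [Fintype I] [DecidableEq I]
    (X : Equiv.Perm (Fin n) → I → Prop) (p : I → ℝ) : ℝ :=
  (1 / 2) * ∑ x : I → Bool,
    |mallowsProb q {σ | ∀ α, X σ α ↔ x α = true} - ∏ α, (if x α then p α else 1 - p α)|


theorem poi_pos {lam : ℝ} (h : 0 < lam) (k : ℕ) : 0 < poissonPMF lam k := by
  unfold poissonPMF; positivity

theorem poi_hasSum (lam : ℝ) : HasSum (poissonPMF lam) 1 := by
  have h := (NormedSpace.expSeries_div_hasSum_exp (𝔸 := ℝ) lam).mul_left (Real.exp (-lam))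
  rw [← Real.exp_eq_exp_ℝ, ← Real.exp_add] at h
  simp only [neg_add_cancel, Real.exp_zero] at h
  have e : poissonPMF lam = fun i => Real.exp (-lam) * (lam ^ i / (i.factorial : ℝ)) := by
    funext k; unfold poissonPMF; ring
  rw [e]; exact h

theorem poi_succ (lam : ℝ) (k : ℕ) :
    ((k : ℝ) + 1) * poissonPMF lam (k + 1) = lam * poissonPMF lam k := by
  unfold poissonPMF
  have : ((k + 1).factorial : ℝ) = (k + 1) * k.factorial := by
    rw [Nat.factorial_succ]; push_cast; ring
  rw [this]
  have h2 : ((k.factorial : ℕ) : ℝ) ≠ 0 := by positivity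
  have h3 : (k : ℝ) + 1 ≠ 0 := by positivity
  field_simp
  ring

def poiS (lam : ℝ) (k : ℕ) : ℝ := ∑ i ∈ Finset.range k, poissonPMF lam i

def poiSA (lam : ℝ) (A : Finset ℕ) (k : ℕ) : ℝ :=
  ∑ i ∈ Finset.range k, if i ∈ A then poissonPMF lam i else 0

theorem poiS_succ (lam : ℝ) (k : ℕ) : poiS lam (k + 1) = poiS lam k + poissonPMF lam k := by
  unfold poiS; rw [Finset.sum_range_succ]

theorem poiSA_succ (lam : ℝ) (A : Finset ℕ) (k : ℕ) :
    poiSA lam A (k + 1) = poiSA lam A k + if k ∈ A then poissonPMF lam k else 0 := by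
  unfold poiSA; rw [Finset.sum_range_succ]

theorem poiS_le_one {lam : ℝ} (h : 0 < lam) (k : ℕ) : poiS lam k ≤ 1 :=
  sum_le_hasSum _ (fun i _ => (poi_pos h i).le) (poi_hasSum lam)

theorem poi_K1 {lam : ℝ} (h : 0 < lam) (j : ℕ) :
    (j : ℝ) * (1 - poiS lam (j + 1)) ≤ lam * (1 - poiS lam j) := by
  have key : ∀ d : ℕ, (j : ℝ) * (poiS lam (j + d + 1) - poiS lam (j + 1)) ≤
      lam * (poiS lam (j + d) - poiS lam j) := by
    intro d
    induction d with
    | zero => simp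
    | succ d ih =>
      have e1 := poiS_succ lam (j + d + 1)
      have e2 := poiS_succ lam (j + d)
      have e3 := poi_succ lam (j + d)
      have e4 := poi_pos h (j + d + 1)
      push_cast at e3
      rw [show j + (d + 1) + 1 = j + d + 1 + 1 by ring, show j + (d + 1) = j + d + 1 by ring, e1]
      rw [e2] at ih ⊢
      have : (0:ℝ) ≤ (d + 1) * poissonPMF lam (j + d + 1) := by positivity
      nlinarith
  have t : Filter.Tendsto (poiS lam) Filter.atTop (nhds 1) := (poi_hasSum lam).tendsto_sum_nat
  have t1 : Filter.Tendsto (fun d => poiS lam (j + d + 1)) Filter.atTop (nhds 1) :=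
    t.comp (Filter.tendsto_atTop_mono (fun d => (by omega : d ≤ j + d + 1)) Filter.tendsto_id)
  have t2 : Filter.Tendsto (fun d => poiS lam (j + d)) Filter.atTop (nhds 1) :=
    t.comp (Filter.tendsto_atTop_mono (fun d => (by omega : d ≤ j + d)) Filter.tendsto_id)
  exact le_of_tendsto_of_tendsto' ((t1.sub_const _).const_mul _) ((t2.sub_const _).const_mul _) key

theorem poi_K2 {lam : ℝ} (h : 0 < lam) (j i : ℕ) (hi : i ≤ j) :
    lam * poiS lam i ≤ j * (poiS lam (i + 1) - poissonPMF lam 0) := by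
  induction i with
  | zero => simp [poiS]
  | succ i ih =>
    have ih := ih (by omega)
    rw [poiS_succ lam (i + 1), poiS_succ lam i] at *
    have e3 := poi_succ lam i
    have e4 := poi_pos h (i + 1)
    have : ((i : ℝ) + 1) ≤ j := by exact_mod_cast hi
    nlinarith

theorem poi_tail {lam : ℝ} (h : 0 < lam) (A : Finset ℕ) (j : ℕ) :
    poiSA lam A j ≤ ∑ i ∈ A, poissonPMF lam i ∧
    ∑ i ∈ A, poissonPMF lam i - poiSA lam A j ≤ 1 - poiS lam j := by
  obtain ⟨M, hM⟩ : ∃ M, A ⊆ Finset.range M := A.exists_nat_subset_range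
  have hA : ∑ i ∈ A, poissonPMF lam i = poiSA lam A (max M j) := by
    unfold poiSA
    rw [← Finset.sum_filter]
    congr 1
    ext i
    simp only [Finset.mem_filter, Finset.mem_range]
    constructor
    · intro hi; exact ⟨lt_of_lt_of_le (Finset.mem_range.1 (hM hi)) (le_max_left _ _), hi⟩
    · exact fun hi => hi.2
  have hpos := fun i => (poi_pos h i).le
  have hsub : Finset.range j ⊆ Finset.range (max M j) := by
    simp
  have h1 := Finset.sum_sdiff (f := fun i => if i ∈ A then poissonPMF lam i else 0) hsub
  have h2 := Finset.sum_sdiff (f := fun i => poissonPMF lam i) hsub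
  have h3 : 0 ≤ ∑ i ∈ Finset.range (max M j) \ Finset.range j, (if i ∈ A then poissonPMF lam i else 0) :=
    Finset.sum_nonneg (fun i _ => by split_ifs; exacts [hpos i, le_rfl])
  have h4 : ∑ i ∈ Finset.range (max M j) \ Finset.range j, (if i ∈ A then poissonPMF lam i else 0)
      ≤ ∑ i ∈ Finset.range (max M j) \ Finset.range j, poissonPMF lam i :=
    Finset.sum_le_sum (fun i _ => by split_ifs; exacts [le_rfl, hpos i])
  have h5 := poiS_le_one h (max M j)
  rw [hA]
  unfold poiS poiSA at *
  constructor <;> linarith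

theorem poi_head {lam : ℝ} (h : 0 < lam) (A : Finset ℕ) (j : ℕ) :
    0 ≤ poiSA lam A j ∧ poiSA lam A j ≤ poiS lam j := by
  have hpos := fun i => (poi_pos h i).le
  unfold poiSA poiS
  exact ⟨Finset.sum_nonneg (fun i _ => by split_ifs; exacts [hpos i, le_rfl]),
    Finset.sum_le_sum (fun i _ => by split_ifs; exacts [le_rfl, hpos i])⟩

theorem stein_alg (lam j u P t a e c p0 : ℝ) (hl : 0 < lam) (hj : 0 < j) (hP : 0 < P)
    (hs : u + P + t = 1) (ha : 0 ≤ a) (hau : a ≤ u) (he : 0 ≤ e) (heP : e ≤ P)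
    (hc : 0 ≤ c) (hct : c ≤ t) (K1 : j * t ≤ lam * (t + P))
    (K2 : lam * u ≤ j * (u + P - p0)) (h0 : 0 ≤ p0) (hp0 : 1 - p0 ≤ lam) :
    |((a + e) - (a + e + c) * (u + P)) / (lam * P) - (a - (a + e + c) * u) / (j * P)| ≤ 1 := by
  have hu : 0 ≤ u := ha.trans hau
  have ht : 0 ≤ t := hc.trans hct
  have k1 : 0 ≤ lam * (t + P) - j * t := by linarith
  have k2 : 0 ≤ j * (u + P) - lam * u := by nlinarith [mul_nonneg hj.le h0]
  have k3 : 0 ≤ j * t + lam * u := by positivity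
  have k4 : j * t + lam * u ≤ j * lam := by
    have : j * (1 - p0) ≤ j * lam := by gcongr
    have e1 : t + (u + P) = 1 := by linarith
    nlinarith
  have hid : ((a + e) - (a + e + c) * (u + P)) / (lam * P) - (a - (a + e + c) * u) / (j * P)
      = (-(a * (lam * (t + P) - j * t)) - c * (j * (u + P) - lam * u) + e * (j * t + lam * u))
        / (lam * j * P) := by
    obtain rfl : t = 1 - u - P := by linarith
    field_simp
    ring
  have m1 := mul_le_mul_of_nonneg_right hau k1
  have m1' := mul_nonneg ha k1
  have m2 := mul_le_mul_of_nonneg_right hct k2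
  have m2' := mul_nonneg hc k2
  have m3 := mul_le_mul_of_nonneg_right heP k3
  have m3' := mul_nonneg he k3
  have m4 := mul_le_mul_of_nonneg_left k4 hP.le
  have id2 : u * (lam * (t + P) - j * t) + t * (j * (u + P) - lam * u) = P * (j * t + lam * u) := by
    ring
  rw [hid, abs_le]
  have hd : 0 < lam * j * P := by positivity
  rw [le_div_iff₀ hd, div_le_iff₀ hd]
  constructor <;> nlinarith

theorem stein_exists {lam : ℝ} (h : 0 < lam) (A : Finset ℕ) :
    ∃ f : ℕ → ℝ, (∀ j : ℕ, lam * f (j + 1) - j * f j =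
      (if j ∈ A then 1 else 0) - ∑ i ∈ A, poissonPMF lam i) ∧
      ∀ j : ℕ, |f (j + 1 + 1) - f (j + 1)| ≤ 1 := by
  set PA := ∑ i ∈ A, poissonPMF lam i with hPA
  have hf : ∀ j : ℕ, (poiSA lam A (j + 1) - PA * poiS lam (j + 1)) / (((j + 1 : ℕ) : ℝ) * poissonPMF lam (j + 1))
      = (poiSA lam A (j + 1) - PA * poiS lam (j + 1)) / (lam * poissonPMF lam j) := by
    intro j; rw [← poi_succ]; push_cast; rfl
  refine ⟨fun j => (poiSA lam A j - PA * poiS lam j) / ((j : ℝ) * poissonPMF lam j), ?_, ?_⟩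
  · intro j
    simp only [hf]
    have hp := poi_pos h j
    have e2 : (j : ℝ) * ((poiSA lam A j - PA * poiS lam j) / ((j : ℝ) * poissonPMF lam j)) =
        (poiSA lam A j - PA * poiS lam j) / poissonPMF lam j := by
      rcases Nat.eq_zero_or_pos j with rfl | hj
      · simp [poiSA, poiS]
      · have : (j : ℝ) ≠ 0 := by positivity
        field_simp
    rw [e2, poiSA_succ, poiS_succ]
    split_ifs <;> field_simp <;> ring
  · intro j
    simp only []
    rw [hf (j + 1)]
    have t1 := poi_tail h A (j + 2)
    have hd := poi_head h A (j + 1)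
    have k1 := poi_K1 h (j + 1)
    have k2 := poi_K2 h (j + 1) (j + 1) le_rfl
    have s1 := poiS_succ lam (j + 1)
    have s2 := poiSA_succ lam A (j + 1)
    have hp := poi_pos h (j + 1)
    have hp0 : poissonPMF lam 0 = Real.exp (-lam) := by simp [poissonPMF]
    have := Real.add_one_le_exp (-lam)
    have key := stein_alg lam ((j + 1 : ℕ) : ℝ) (poiS lam (j + 1)) (poissonPMF lam (j + 1))
      (1 - poiS lam (j + 2)) (poiSA lam A (j + 1)) (if j + 1 ∈ A then poissonPMF lam (j + 1) else 0)
      (PA - poiSA lam A (j + 2)) (poissonPMF lam 0) h (by positivity) hp (by linarith) hd.1 hd.2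
      (by split_ifs; exacts [hp.le, le_rfl]) (by split_ifs; exacts [le_rfl, hp.le])
      (by linarith) (by linarith) (by
        rw [show 1 - poiS lam (j + 2) + poissonPMF lam (j + 1) = 1 - poiS lam (j + 1) by linarith]
        exact k1) (by rw [← s1]; exact k2) (poi_pos h 0).le (by rw [hp0]; linarith)
    rw [← s1, ← s2, show poiSA lam A (j + 1 + 1) + (PA - poiSA lam A (j + 2)) = PA by ring] at key
    exact key

def ind (P : Prop) : ℝ := if P then 1 else 0

theorem ind_nonneg (P : Prop) : 0 ≤ ind P := by unfold ind; split_ifs <;> norm_num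

theorem card_eq_sum_ind {Ω : Type*} (I : Finset ℕ) (X : ℕ → Ω → Prop) (ω : Ω) :
    (((I.filter (fun i => X i ω)).card : ℕ) : ℝ) = ∑ i ∈ I, ind (X i ω) := by
  unfold ind
  rw [Finset.sum_boole]

theorem lip_of_step (f : ℕ → ℝ) (hf : ∀ j : ℕ, |f (j + 1 + 1) - f (j + 1)| ≤ 1) (b d : ℕ) :
    |f (b + d + 1) - f (b + 1)| ≤ d := by
  induction d with
  | zero => simp
  | succ d ih =>
    have h1 := hf (b + d)
    have h2 := abs_sub_le (f (b + (d + 1) + 1)) (f (b + d + 1)) (f (b + 1))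
    rw [show b + (d + 1) + 1 = b + d + 1 + 1 by ring] at *
    push_cast
    linarith

theorem chen_stein_core {Ω : Type*} [Fintype Ω] (w : Ω → ℝ) (hw : ∀ ω, 0 ≤ w ω)
    (I : Finset ℕ) (X : ℕ → Ω → Prop) (B : ℕ → Finset ℕ)
    (hB : ∀ i ∈ I, B i ⊆ I) (hBi : ∀ i ∈ I, i ∈ B i) (p : ℕ → ℝ) (hp0 : ∀ i ∈ I, 0 ≤ p i)
    (hp : ∀ i ∈ I, ∑ ω, w ω * ind (X i ω) = p i)
    (W : Ω → ℕ) (hW : ∀ ω, W ω = (I.filter (fun i => X i ω)).card)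
    (hind : ∀ i ∈ I, ∀ g : ℕ → ℝ,
      ∑ ω, w ω * ind (X i ω) * g (((I \ B i).filter (fun j => X j ω)).card) =
      p i * ∑ ω, w ω * g (((I \ B i).filter (fun j => X j ω)).card))
    (lam : ℝ) (hlam : lam = ∑ i ∈ I, p i)
    (f : ℕ → ℝ) (hf : ∀ j : ℕ, |f (j + 1 + 1) - f (j + 1)| ≤ 1) :
    ∑ ω, w ω * (lam * f (W ω + 1) - W ω * f (W ω)) ≤
      ∑ i ∈ I, ∑ j ∈ B i, p i * p j +
      ∑ i ∈ I, ∑ j ∈ (B i).erase i, ∑ ω, w ω * (ind (X i ω) * ind (X j ω)) := by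
  have e1 : ∑ ω, w ω * (lam * f (W ω + 1) - W ω * f (W ω)) =
      ∑ i ∈ I, ∑ ω, w ω * (p i * f (W ω + 1) - ind (X i ω) * f (W ω)) := by
    rw [Finset.sum_comm]
    refine Finset.sum_congr rfl fun ω _ => ?_
    rw [← Finset.mul_sum, Finset.sum_sub_distrib, ← Finset.sum_mul, ← Finset.sum_mul, hlam]
    nth_rewrite 2 [hW ω]
    rw [card_eq_sum_ind]
  rw [e1, ← Finset.sum_add_distrib]
  refine Finset.sum_le_sum fun i hi => ?_
  set V : Ω → ℕ := fun ω => ((I \ B i).filter (fun j => X j ω)).card with hV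
  set U : Ω → ℕ := fun ω => ((B i).filter (fun j => X j ω)).card with hU
  have hWVU : ∀ ω, W ω = V ω + U ω := by
    intro ω
    rw [hW, hV, hU]
    simp only
    rw [← Finset.card_union_of_disjoint]
    · rw [← Finset.filter_union, Finset.sdiff_union_of_subset (hB i hi)]
    · exact Finset.disjoint_filter_filter Finset.sdiff_disjoint
  have e2 : ∑ ω, w ω * (p i * f (W ω + 1) - ind (X i ω) * f (W ω)) =
      ∑ ω, w ω * (p i * (f (W ω + 1) - f (V ω + 1)) - ind (X i ω) * (f (W ω) - f (V ω + 1))) := by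
    have := hind i hi (fun k => f (k + 1))
    rw [Finset.mul_sum] at this
    rw [← sub_eq_zero, ← Finset.sum_sub_distrib]
    rw [← sub_eq_zero, ← Finset.sum_sub_distrib] at this
    rw [← neg_eq_zero, ← this, ← Finset.sum_neg_distrib]
    refine Finset.sum_congr rfl fun ω _ => ?_
    ring
  have hUsum : ∀ ω, (U ω : ℝ) = ∑ j ∈ B i, ind (X j ω) := fun ω => card_eq_sum_ind _ _ _
  have e3 : ∀ ω, w ω * (p i * (f (W ω + 1) - f (V ω + 1)) - ind (X i ω) * (f (W ω) - f (V ω + 1)))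
      ≤ ∑ j ∈ B i, p i * (w ω * ind (X j ω)) +
        ∑ j ∈ (B i).erase i, w ω * (ind (X i ω) * ind (X j ω)) := by
    intro ω
    have h1 : f (W ω + 1) - f (V ω + 1) ≤ U ω := by
      rw [hWVU]; exact (abs_le.1 (lip_of_step f hf (V ω) (U ω))).2
    have h2 : - (ind (X i ω) * (f (W ω) - f (V ω + 1))) ≤
        ind (X i ω) * ∑ j ∈ (B i).erase i, ind (X j ω) := by
      by_cases hx : X i ω
      · have hs := Finset.add_sum_erase (B i) (fun j => ind (X j ω)) (hBi i hi)
        have hone : ind (X i ω) = 1 := by simp [ind, hx]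
        rw [← hUsum, hone] at hs
        have hU1 : 1 ≤ U ω := Finset.card_pos.2 ⟨i, Finset.mem_filter.2 ⟨hBi i hi, hx⟩⟩
        obtain ⟨u, hu⟩ := Nat.exists_eq_add_of_le' hU1
        have := (abs_le.1 (lip_of_step f hf (V ω) u)).1
        rw [hWVU, hone, hu, ← add_assoc]
        rw [hu] at hs; push_cast at hs
        linarith
      · have : ind (X i ω) = 0 := by simp [ind, hx]
        simp [this]
    have h3 := mul_le_mul_of_nonneg_left h1 (hp0 i hi)
    calc _ ≤ w ω * (p i * U ω + ind (X i ω) * ∑ j ∈ (B i).erase i, ind (X j ω)) :=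
          mul_le_mul_of_nonneg_left (by linarith) (hw ω)
      _ = _ := by
        rw [hUsum, ← Finset.mul_sum, ← Finset.mul_sum, ← Finset.mul_sum, ← Finset.mul_sum]; ring
  rw [e2]
  refine (Finset.sum_le_sum fun ω _ => e3 ω).trans (le_of_eq ?_)
  rw [Finset.sum_add_distrib]
  congr 1
  · rw [Finset.sum_comm]
    refine Finset.sum_congr rfl fun j hj => ?_
    rw [← Finset.mul_sum, hp j (hB i hi hj)]
  · rw [Finset.sum_comm]

theorem tv_le {Ω : Type*} [Fintype Ω] (w : Ω → ℝ) 
    (hw1 : ∑ ω, w ω = 1) (W : Ω → ℕ) (lam : ℝ) (hlam : 0 < lam) (b : ℝ)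
    (hb : ∀ f : ℕ → ℝ, (∀ j : ℕ, |f (j + 1 + 1) - f (j + 1)| ≤ 1) →
      ∑ ω, w ω * (lam * f (W ω + 1) - W ω * f (W ω)) ≤ b) :
    (1 / 2) * ∑' k : ℕ, |∑ ω ∈ Finset.univ.filter (fun ω => W ω = k), w ω - poissonPMF lam k| ≤ b := by
  obtain ⟨M, hM⟩ : ∃ M, Finset.univ.image W ⊆ Finset.range M := Finset.exists_nat_subset_range _
  set P : ℕ → ℝ := fun k => ∑ ω ∈ Finset.univ.filter (fun ω => W ω = k), w ω with hP
  have hWM : ∀ ω, W ω < M := fun ω => Finset.mem_range.1 (hM (Finset.mem_image_of_mem _ (Finset.mem_univ _)))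
  have hP0 : ∀ k, k ∉ Finset.range M → P k = 0 := by
    intro k hk
    refine Finset.sum_eq_zero fun ω hω => ?_
    exfalso; apply hk
    rw [← (Finset.mem_filter.1 hω).2]; exact Finset.mem_range.2 (hWM ω)
  have hPs : HasSum P 1 := by
    have : HasSum P (∑ k ∈ Finset.range M, P k) := hasSum_sum_of_ne_finset_zero hP0
    convert this using 1
    rw [← hw1]
    exact (Finset.sum_fiberwise_of_maps_to (fun ω _ => Finset.mem_range.2 (hWM ω)) w).symm
  set A := (Finset.range M).filter (fun k => poissonPMF lam k < P k) with hA
  have hmax : HasSum (fun k => max (P k - poissonPMF lam k) 0) (∑ k ∈ A, (P k - poissonPMF lam k)) := by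
    have : ∑ k ∈ A, (P k - poissonPMF lam k) = ∑ k ∈ A, max (P k - poissonPMF lam k) 0 := by
      refine Finset.sum_congr rfl fun k hk => ?_
      rw [max_eq_left]; have := (Finset.mem_filter.1 hk).2; linarith
    rw [this]
    apply hasSum_sum_of_ne_finset_zero
    intro k hk
    apply max_eq_right
    by_cases hkM : k ∈ Finset.range M
    · by_contra hc
      exact hk (Finset.mem_filter.2 ⟨hkM, by linarith⟩)
    · rw [hP0 k hkM]; have := poi_pos hlam k; linarith
  have habs : HasSum (fun k => |P k - poissonPMF lam k|) (2 * ∑ k ∈ A, (P k - poissonPMF lam k)) := by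
    have := (hmax.mul_left 2).sub (hPs.sub (poi_hasSum lam))
    rw [sub_self, sub_zero] at this
    have e : (fun k => |P k - poissonPMF lam k|) =
        fun k => 2 * max (P k - poissonPMF lam k) 0 - (P k - poissonPMF lam k) := by
      funext k
      rcases le_total 0 (P k - poissonPMF lam k) with h | h
      · rw [abs_of_nonneg h, max_eq_left h]; ring
      · rw [abs_of_nonpos h, max_eq_right h]; ring
    rw [e]; exact this
  rw [habs.tsum_eq]
  obtain ⟨f, hf1, hf2⟩ := stein_exists hlam A
  refine le_trans (le_of_eq ?_) (hb f hf2)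
  simp only [hf1, mul_sub, Finset.sum_sub_distrib]
  rw [← Finset.sum_mul, hw1]
  have : ∑ k ∈ A, P k = ∑ ω, w ω * (if W ω ∈ A then 1 else 0) := by
    simp only [mul_ite, mul_one, mul_zero]
    rw [← Finset.sum_filter, ← Finset.sum_fiberwise_of_maps_to (s := Finset.univ.filter (fun ω => W ω ∈ A)) (t := A) (g := W)
      (fun ω h => (Finset.mem_filter.1 h).2)]
    refine Finset.sum_congr rfl fun k hk => ?_
    rw [Finset.filter_filter]
    refine Finset.sum_congr ?_ fun _ _ => rfl
    ext ω; simp only [Finset.mem_filter, Finset.mem_univ, true_and]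
    constructor
    · rintro rfl; exact ⟨hk, rfl⟩
    · exact fun h => h.2
  rw [this]; ring

theorem invPoly_pos {q : ℝ} (hq : 0 < q) (n : ℕ) : 0 < invPoly n q := by
  unfold invPoly
  refine Finset.prod_pos fun j _ => Finset.sum_pos (fun i _ => by positivity) (by simp)

def consPerm {n : ℕ} (x : Fin (n + 1) × Equiv.Perm (Fin n)) : Equiv.Perm (Fin (n + 1)) :=
  (Equiv.Perm.decomposeFin.symm (0, x.2)).trans x.1.cycleRange.symm

theorem consPerm_zero {n : ℕ} (x : Fin (n + 1) × Equiv.Perm (Fin n)) : consPerm x 0 = x.1 := by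
  simp [consPerm]

theorem consPerm_succ {n : ℕ} (x : Fin (n + 1) × Equiv.Perm (Fin n)) (i : Fin n) :
    consPerm x i.succ = x.1.succAbove (x.2 i) := by
  simp [consPerm]

theorem consPerm_bij (n : ℕ) : Function.Bijective (consPerm (n := n)) := by
  rw [Fintype.bijective_iff_injective_and_card]
  constructor
  · rintro ⟨p, e⟩ ⟨p', e'⟩ h
    have h0 := congrArg (fun s => s 0) h
    simp only [consPerm_zero] at h0
    subst h0
    congr 1
    ext i : 1
    have h1 := congrArg (fun s => s i.succ) h
    simp only [consPerm_succ] at h1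
    exact Fin.succAbove_right_injective h1
  · simp [Fintype.card_perm, Nat.factorial_succ]

theorem invCount_eq_sum {n : ℕ} (σ : Equiv.Perm (Fin n)) :
    invCount σ = ∑ a : Fin n, ∑ b : Fin n, if a < b ∧ σ b < σ a then 1 else 0 := by
  unfold invCount
  rw [Finset.card_filter, Fintype.sum_prod_type]

theorem consPerm_inv {n : ℕ} (x : Fin (n + 1) × Equiv.Perm (Fin n)) :
    invCount (consPerm x) = x.1 + invCount x.2 := by
  obtain ⟨p, e⟩ := x
  rw [invCount_eq_sum, invCount_eq_sum, Fin.sum_univ_succ]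
  congr 1
  · rw [Fin.sum_univ_succ]
    simp only [consPerm_succ, consPerm_zero, lt_self_iff_false, false_and, if_false, zero_add,
      Fin.succ_pos, true_and, Fin.succAbove_lt_iff_castSucc_lt]
    rw [Equiv.sum_comp e (fun i => if i.castSucc < p then 1 else 0), ← Finset.card_filter]
    have := Fin.card_filter_val_lt (n := n) (m := (p : ℕ))
    simp only [Fin.lt_def, Fin.val_castSucc]
    omega
  · refine Finset.sum_congr rfl fun a _ => ?_
    rw [Fin.sum_univ_succ]
    simp only [consPerm_succ, consPerm_zero, Fin.not_lt_zero, false_and, if_false, zero_add,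
      Fin.succ_lt_succ_iff, Fin.succAbove_lt_succAbove_iff]

theorem sum_inv (q : ℝ) (n : ℕ) : ∑ σ : Equiv.Perm (Fin n), q ^ invCount σ = invPoly n q := by
  induction n with
  | zero => 
    simp [invPoly, invCount]
  | succ n ih =>
    rw [← (consPerm_bij n).sum_comp (fun σ => q ^ invCount σ)]
    simp only [consPerm_inv, pow_add]
    rw [Fintype.sum_prod_type]
    simp only [← Finset.mul_sum]
    rw [ih, ← Finset.sum_mul, Fin.sum_univ_eq_sum_range (fun i => q ^ i)]
    unfold invPoly
    rw [Finset.prod_range_succ, mul_comm]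

def blk {n : ℕ} (k i : ℕ) (h : i + k ≤ n) : Fin k ↪ Fin n :=
  ⟨fun j => ⟨i + j, by have := j.isLt; omega⟩, fun a b hab => by
    simp only [Fin.mk.injEq] at hab; ext; omega⟩

theorem blk_val {n k i : ℕ} (h : i + k ≤ n) (x : Fin k) : ((blk k i h x : Fin n) : ℕ) = i + x := rfl

theorem blk_lt {n k i : ℕ} (h : i + k ≤ n) (x y : Fin k) : blk k i h x < blk k i h y ↔ x < y := by
  rw [Fin.lt_def, Fin.lt_def, blk_val, blk_val]; omega

theorem blk_range {n k i : ℕ} (h : i + k ≤ n) (a : Fin n) :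
    a ∈ Set.range (blk k i h) ↔ i ≤ (a : ℕ) ∧ (a : ℕ) < i + k := by
  constructor
  · rintro ⟨x, rfl⟩; rw [blk_val]; have := x.isLt; omega
  · rintro ⟨h1, h2⟩
    exact ⟨⟨a - i, by omega⟩, by ext; rw [blk_val]; simp only; omega⟩

def act {n : ℕ} (k i : ℕ) (h : i + k ≤ n) : Equiv.Perm (Fin k) →* Equiv.Perm (Fin n) :=
  Equiv.Perm.viaEmbeddingHom (blk k i h)

theorem act_blk {n k i : ℕ} (h : i + k ≤ n) (ρ : Equiv.Perm (Fin k)) (x : Fin k) :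
    act k i h ρ (blk k i h x) = blk k i h (ρ x) :=
  Equiv.Perm.viaEmbedding_apply ρ (blk k i h) x

theorem act_out {n k i : ℕ} (h : i + k ≤ n) (ρ : Equiv.Perm (Fin k)) (a : Fin n)
    (ha : a ∉ Set.range (blk k i h)) : act k i h ρ a = a :=
  Equiv.Perm.viaEmbedding_apply_of_notMem ρ (blk k i h) a ha

def Inc {n k i : ℕ} (h : i + k ≤ n) (σ : Equiv.Perm (Fin n)) : Prop :=
  StrictMono fun x : Fin k => σ (blk k i h x)

theorem inv_block {n k i : ℕ} (h : i + k ≤ n) (σ : Equiv.Perm (Fin n)) (hσ : Inc h σ)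
    (ρ : Equiv.Perm (Fin k)) : invCount (σ * act k i h ρ) = invCount σ + invCount ρ := by
  have e1 : invCount σ = ∑ a : Fin n, ∑ b : Fin n,
      if act k i h ρ a < act k i h ρ b ∧ σ (act k i h ρ b) < σ (act k i h ρ a) then 1 else 0 := by
    rw [invCount_eq_sum]
    rw [← Equiv.sum_comp (act k i h ρ)]
    refine Finset.sum_congr rfl fun a _ => ?_
    rw [← Equiv.sum_comp (act k i h ρ)]
  have e2 : invCount ρ = ∑ a : Fin n, ∑ b : Fin n,
      if (∃ x y, blk k i h x = a ∧ blk k i h y = b ∧ x < y ∧ ρ y < ρ x) then 1 else 0 := by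
    rw [← Fintype.sum_prod_type' (f := fun a b => 
      if (∃ x y, blk k i h x = a ∧ blk k i h y = b ∧ x < y ∧ ρ y < ρ x) then 1 else 0), ← Finset.card_filter]
    unfold invCount
    rw [← Finset.card_map ((blk k i h).prodMap (blk k i h))]
    congr 1
    ext ⟨a, b⟩
    simp only [Finset.mem_map, Finset.mem_filter, Finset.mem_univ, true_and, Prod.exists,
      Function.Embedding.coe_prodMap, Prod.map_apply, Prod.mk.injEq]
    constructor
    · rintro ⟨x, y, ⟨h1, h2⟩, h3, h4⟩; exact ⟨x, y, h3, h4, h1, h2⟩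
    · rintro ⟨x, y, h3, h4, h1, h2⟩; exact ⟨x, y, ⟨h1, h2⟩, h3, h4⟩
  rw [invCount_eq_sum, e1, e2, ← Finset.sum_add_distrib]
  refine Finset.sum_congr rfl fun a _ => ?_
  rw [← Finset.sum_add_distrib]
  refine Finset.sum_congr rfl fun b _ => ?_
  simp only [Equiv.Perm.mul_apply]
  by_cases hab : a ∈ Set.range (blk k i h) ∧ b ∈ Set.range (blk k i h)
  · obtain ⟨⟨x, rfl⟩, ⟨y, rfl⟩⟩ := hab
    have hlt : ∀ u v, σ (blk k i h u) < σ (blk k i h v) ↔ u < v := fun u v => hσ.lt_iff_lt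
    have h3 : (∃ x' y', blk k i h x' = blk k i h x ∧ blk k i h y' = blk k i h y ∧ x' < y' ∧ ρ y' < ρ x')
        ↔ x < y ∧ ρ y < ρ x := by
      constructor
      · rintro ⟨x', y', h1, h2, h3⟩
        rw [(blk k i h).injective h1, (blk k i h).injective h2] at h3
        exact h3
      · intro h; exact ⟨x, y, rfl, rfl, h⟩
    have h4 : ¬ (ρ x < ρ y ∧ ρ y < ρ x) := fun hh => lt_asymm hh.1 hh.2
    simp only [act_blk, hlt, blk_lt, h3, h4, if_false, zero_add]
  · have h3 : ¬ (∃ x' y', blk k i h x' = a ∧ blk k i h y' = b ∧ x' < y' ∧ ρ y' < ρ x') := by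
      rintro ⟨x, y, rfl, rfl, -⟩; exact hab ⟨⟨x, rfl⟩, ⟨y, rfl⟩⟩
    have h4 : act k i h ρ a < act k i h ρ b ↔ a < b := by
      by_cases ha : a ∈ Set.range (blk k i h)
      · have hb : b ∉ Set.range (blk k i h) := fun hb => hab ⟨ha, hb⟩
        rw [act_out h ρ b hb]
        obtain ⟨x, rfl⟩ := ha
        rw [act_blk, Fin.lt_def, Fin.lt_def, blk_val, blk_val]
        rw [blk_range] at hb
        have := x.isLt; have := (ρ x).isLt; omega
      · rw [act_out h ρ a ha]
        by_cases hb : b ∈ Set.range (blk k i h)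
        · obtain ⟨x, rfl⟩ := hb
          rw [act_blk, Fin.lt_def, Fin.lt_def, blk_val, blk_val]
          rw [blk_range] at ha
          have := x.isLt; have := (ρ x).isLt; omega
        · rw [act_out h ρ b hb]
    simp only [h3, h4, if_false, add_zero]
    congr

theorem sort_sum {n k i : ℕ} (h : i + k ≤ n) (σ : Equiv.Perm (Fin n)) :
    ∑ ρ : Equiv.Perm (Fin k), ind (Inc h (σ * act k i h ρ⁻¹)) = 1 := by
  have hinj : Function.Injective (fun x => σ (blk k i h x)) :=
    σ.injective.comp (blk k i h).injective
  have hch : ∀ ρ : Equiv.Perm (Fin k), Inc h (σ * act k i h ρ⁻¹) ↔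
      ρ = (Tuple.sort (fun x => σ (blk k i h x)))⁻¹ := by
    intro ρ
    have h1 : Inc h (σ * act k i h ρ⁻¹) ↔ StrictMono ((fun x => σ (blk k i h x)) ∘ ⇑ρ⁻¹) := by
      unfold Inc
      simp only [Equiv.Perm.mul_apply, act_blk]; rfl
    rw [h1]
    constructor
    · intro hm
      have := Tuple.unique_monotone hm.monotone (Tuple.monotone_sort (fun x => σ (blk k i h x)))
      have h2 : ρ⁻¹ = Tuple.sort (fun x => σ (blk k i h x)) :=
        Equiv.ext fun x => hinj (congrFun this x)
      rw [← h2, inv_inv]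
    · rintro rfl
      rw [inv_inv]
      exact (Tuple.monotone_sort _).strictMono_of_injective (hinj.comp (Equiv.injective _))
  simp only [hch, ind]
  simp

theorem inv_rev (k : ℕ) : invCount (Fin.revPerm : Equiv.Perm (Fin k)) = k.choose 2 := by
  rw [invCount_eq_sum, Finset.sum_comm]
  have : ∀ b : Fin k, (∑ a : Fin k, if a < b ∧ (Fin.revPerm b) < (Fin.revPerm a) then 1 else 0) = (b : ℕ) := by
    intro b
    simp only [Fin.revPerm_apply, Fin.rev_lt_rev, and_self]
    rw [← Finset.card_filter]
    have : (Finset.univ.filter (fun a : Fin k => a < b)) = Finset.Iio b := by ext; simp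
    rw [this, Fin.card_Iio]
  simp only [this]
  rw [Fin.sum_univ_eq_sum_range (fun i => i), Finset.sum_range_id, Nat.choose_two_right]

abbrev Dec {n : ℕ} (k i : ℕ) (σ : Equiv.Perm (Fin n)) : Prop :=
  OccursConsec (Fin.revPerm : Equiv.Perm (Fin k)) σ i

theorem dec_rev {n k i : ℕ} (h : i + k ≤ n) (σ : Equiv.Perm (Fin n)) :
    Dec k i (σ * act k i h Fin.revPerm) ↔ Inc h σ := by
  have h0 : Dec k i (σ * act k i h Fin.revPerm) ↔ ∀ x y : Fin k,
      (σ * act k i h Fin.revPerm) (blk k i h x) < (σ * act k i h Fin.revPerm) (blk k i h y) ↔ 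
      Fin.revPerm x < Fin.revPerm y :=
    ⟨fun ⟨_, h⟩ => h, fun hh => ⟨h, hh⟩⟩
  rw [h0]
  simp only [Equiv.Perm.mul_apply, act_blk, Inc]
  constructor
  · intro hh x y hxy
    have := (hh x.rev y.rev).2 (by simpa using hxy)
    simpa using this
  · intro hh x y
    exact hh.lt_iff_lt

theorem block_main {n k i : ℕ} (h : i + k ≤ n) (q : ℝ) (g : Equiv.Perm (Fin n) → ℝ)
    (hg : ∀ σ ρ, g (σ * act k i h ρ) = g σ) :
    invPoly k q * ∑ σ : Equiv.Perm (Fin n), q ^ invCount σ * ind (Dec k i σ) * g σ =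
      q ^ (k.choose 2) * ∑ σ : Equiv.Perm (Fin n), q ^ invCount σ * g σ := by
  have e1 : ∑ σ : Equiv.Perm (Fin n), q ^ invCount σ * g σ =
      invPoly k q * ∑ σ : Equiv.Perm (Fin n), ind (Inc h σ) * (q ^ invCount σ * g σ) := by
    calc ∑ σ : Equiv.Perm (Fin n), q ^ invCount σ * g σ
        = ∑ σ : Equiv.Perm (Fin n), ∑ ρ : Equiv.Perm (Fin k),
            ind (Inc h (σ * act k i h ρ⁻¹)) * (q ^ invCount σ * g σ) := by
          refine Finset.sum_congr rfl fun σ _ => ?_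
          rw [← Finset.sum_mul, sort_sum, one_mul]
      _ = ∑ ρ : Equiv.Perm (Fin k), ∑ σ : Equiv.Perm (Fin n), 
            ind (Inc h (σ * act k i h ρ⁻¹)) * (q ^ invCount σ * g σ) := Finset.sum_comm
      _ = ∑ ρ : Equiv.Perm (Fin k), ∑ σ : Equiv.Perm (Fin n), 
            q ^ invCount ρ * (ind (Inc h σ) * (q ^ invCount σ * g σ)) := by
          refine Finset.sum_congr rfl fun ρ _ => ?_
          rw [← Equiv.sum_comp (Equiv.mulRight (act k i h ρ))]
          refine Finset.sum_congr rfl fun σ _ => ?_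
          simp only [Equiv.coe_mulRight]
          rw [hg, mul_assoc σ, ← map_mul, mul_inv_cancel, map_one, mul_one]
          by_cases hi : Inc h σ
          · rw [inv_block h σ hi, pow_add]; ring
          · simp [ind, hi]
      _ = _ := by
          rw [← sum_inv, Finset.sum_mul]
          simp only [Finset.mul_sum]
  have e2 : ∑ σ : Equiv.Perm (Fin n), q ^ invCount σ * ind (Dec k i σ) * g σ =
      q ^ (k.choose 2) * ∑ σ : Equiv.Perm (Fin n), ind (Inc h σ) * (q ^ invCount σ * g σ) := by
    rw [← Equiv.sum_comp (Equiv.mulRight (act k i h Fin.revPerm)), Finset.mul_sum]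
    refine Finset.sum_congr rfl fun σ _ => ?_
    simp only [Equiv.coe_mulRight]
    rw [hg]
    simp only [dec_rev]
    by_cases hi : Inc h σ
    · rw [inv_block h σ hi, inv_rev, pow_add]; ring
    · simp [ind, hi]
  rw [e1, e2]; ring

theorem dec_iff {n k i : ℕ} (σ : Equiv.Perm (Fin n)) : Dec k i σ ↔
    i + k ≤ n ∧ ∀ a b : Fin n, i ≤ (a : ℕ) → a < b → (b : ℕ) < i + k → σ b < σ a := by
  constructor
  · rintro ⟨h, hh⟩
    refine ⟨h, fun a b h1 h2 h3 => ?_⟩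
    obtain ⟨x, rfl⟩ := (blk_range h a).2 ⟨h1, by rw [Fin.lt_def] at h2; omega⟩
    obtain ⟨y, rfl⟩ := (blk_range h b).2 ⟨by rw [Fin.lt_def] at h2; omega, h3⟩
    exact (hh y x).2 (by simpa [blk_lt] using h2)
  · rintro ⟨h, hh⟩
    refine ⟨h, fun x y => ?_⟩
    have key : ∀ x y : Fin k, x < y → σ (blk k i h y) < σ (blk k i h x) := fun x y hxy =>
      hh _ _ (by rw [blk_val]; omega) ((blk_lt h x y).2 hxy) (by rw [blk_val]; have := y.isLt; omega)
    simp only [Fin.revPerm_apply, Fin.rev_lt_rev]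
    change σ (blk k i h x) < σ (blk k i h y) ↔ y < x
    constructor
    · intro hl
      by_contra hc
      rcases (not_lt.1 hc).eq_or_lt with rfl | hc
      · exact lt_irrefl _ hl
      · exact lt_asymm hl (key x y hc)
    · exact key y x

theorem dec_overlap {n m i d : ℕ} (hd : d < m) (σ : Equiv.Perm (Fin n))
    (h1 : Dec m i σ) (h2 : Dec m (i + d) σ) : Dec (m + d) i σ := by
  rw [dec_iff] at *
  refine ⟨by omega, fun a b ha hab hb => ?_⟩
  rw [Fin.lt_def] at hab
  by_cases c1 : (b : ℕ) < i + m
  · exact h1.2 a b ha hab c1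
  by_cases c2 : i + d ≤ (a : ℕ)
  · exact h2.2 a b c2 hab (by omega)
  have l1 := h1.2 a ⟨i + d, by omega⟩ ha (by rw [Fin.lt_def]; simp only; omega) (by simp only; omega)
  have l2 := h2.2 ⟨i + d, by omega⟩ b (by simp) (by rw [Fin.lt_def]; simp only; omega) (by omega)
  exact l2.trans l1

theorem dec_act {n m i j : ℕ} (h : i + m ≤ n) (hj : i + m ≤ j ∨ j + m ≤ i) (σ : Equiv.Perm (Fin n))
    (ρ : Equiv.Perm (Fin m)) : Dec m j (σ * act m i h ρ) ↔ Dec m j σ := by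
  have key : ∀ a : Fin n, j ≤ (a : ℕ) → (a : ℕ) < j + m → (σ * act m i h ρ) a = σ a := by
    intro a h1 h2
    rw [Equiv.Perm.mul_apply, act_out]
    rw [blk_range]; omega
  rw [dec_iff, dec_iff]
  refine and_congr Iff.rfl (forall_congr' fun a => forall_congr' fun b => ?_)
  refine forall_congr' fun ha => forall_congr' fun hab => forall_congr' fun hb => ?_
  rw [Fin.lt_def] at hab
  rw [key a ha (by omega), key b (by omega) hb]

theorem pair_count {N m : ℕ} (I : Finset ℕ) (hI : I = Finset.range N)
    (B : ℕ → Finset ℕ) (hB : ∀ i, B i = I.filter (fun j => i < j + m ∧ j < i + m)) (hm : 1 ≤ m) :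
    ∑ i ∈ I, ((B i).card : ℝ) ≤ N * (2 * m - 1) := by
  have : ∀ i ∈ I, ((B i).card : ℝ) ≤ 2 * m - 1 := by
    intro i _
    have h1 : (B i).card ≤ 2 * m - 1 := by
      have hsub : B i ⊆ Finset.Ico (i + 1 - m) (i + m) := by
        intro j hj
        rw [hB, Finset.mem_filter] at hj
        rw [Finset.mem_Ico]; omega
      have := Finset.card_le_card hsub
      rw [Nat.card_Ico] at this
      omega
    have h2 : (B i).card + 1 ≤ 2 * m := by omega
    have h3 : ((B i).card : ℝ) + 1 ≤ 2 * m := by exact_mod_cast h2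
    linarith
  refine (Finset.sum_le_sum this).trans ?_
  rw [Finset.sum_const, hI, Finset.card_range, nsmul_eq_mul]

theorem off_sum {N m : ℕ} (hN : 1 ≤ N) (I : Finset ℕ) (hI : I = Finset.range N)
    (B : ℕ → Finset ℕ) (hB : ∀ i, B i = I.filter (fun j => i < j + m ∧ j < i + m))
    (E : ℕ → ℕ → ℝ) (Q : ℕ → ℝ) (hQ : ∀ d, 0 ≤ Q d)
    (hE1 : ∀ i d, i + d ∈ I → 1 ≤ d → d < m → E i (i + d) ≤ Q d)
    (hE2 : ∀ i d, i + d ∈ I → 1 ≤ d → d < m → E (i + d) i ≤ Q d) :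
    ∑ i ∈ I, ∑ j ∈ (B i).erase i, E i j ≤ 2 * ((N : ℝ) - 1) * ∑ d ∈ Finset.Icc 1 (m - 1), Q d := by
  have h1 : ∀ i ∈ I, ∑ j ∈ (B i).erase i, E i j ≤
      ∑ j ∈ I, ∑ d ∈ Finset.Icc 1 (m - 1), (ind (j = i + d) * Q d + ind (i = j + d) * Q d) := by
    intro i hi
    have hn : ∀ j, ∀ d ∈ Finset.Icc 1 (m - 1), 0 ≤ ind (j = i + d) * Q d + ind (i = j + d) * Q d :=
      fun j d _ => add_nonneg (mul_nonneg (ind_nonneg _) (hQ d)) (mul_nonneg (ind_nonneg _) (hQ d))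
    have hsub : (B i).erase i ⊆ I := by
      intro j hj
      have := Finset.mem_of_mem_erase hj
      rw [hB] at this
      exact (Finset.mem_filter.1 this).1
    refine le_trans (Finset.sum_le_sum fun j hj => ?_)
      (Finset.sum_le_sum_of_subset_of_nonneg hsub fun j _ _ => Finset.sum_nonneg (hn j))
    have hjI := hsub hj
    have hne := Finset.ne_of_mem_erase hj
    have hjB := Finset.mem_of_mem_erase hj
    rw [hB, Finset.mem_filter] at hjB
    rcases lt_or_gt_of_ne hne with hlt | hlt
    · obtain ⟨d, rfl⟩ := Nat.exists_eq_add_of_lt hlt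
      have hd : d + 1 ∈ Finset.Icc 1 (m - 1) := by rw [Finset.mem_Icc]; omega
      refine le_trans ?_ (Finset.single_le_sum (hn j) hd)
      have := hE2 j (d + 1) hi (by omega) (by omega)
      have e1 : ind (j + d + 1 = j + (d + 1)) = 1 := by simp [ind, add_assoc]
      have e2 := mul_nonneg (ind_nonneg (j = j + d + 1 + (d + 1))) (hQ (d + 1))
      rw [e1, one_mul]
      rw [← add_assoc] at this
      linarith
    · obtain ⟨d, rfl⟩ := Nat.exists_eq_add_of_lt hlt
      have hd : d + 1 ∈ Finset.Icc 1 (m - 1) := by rw [Finset.mem_Icc]; omega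
      refine le_trans ?_ (Finset.single_le_sum (hn _) hd)
      have := hE1 i (d + 1) hjI (by omega) (by omega)
      have e1 : ind (i + d + 1 = i + (d + 1)) = 1 := by simp [ind, add_assoc]
      have e2 := mul_nonneg (ind_nonneg (i = i + d + 1 + (d + 1))) (hQ (d + 1))
      rw [e1, one_mul]
      rw [← add_assoc] at this
      linarith
  refine (Finset.sum_le_sum h1).trans ?_
  have h2 : ∑ i ∈ I, ∑ j ∈ I, ∑ d ∈ Finset.Icc 1 (m - 1),
        (ind (j = i + d) * Q d + ind (i = j + d) * Q d) =
      ∑ d ∈ Finset.Icc 1 (m - 1), (∑ i ∈ I, ∑ j ∈ I, ind (j = i + d) + ∑ i ∈ I, ∑ j ∈ I, ind (i = j + d)) * Q d := by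
    rw [Finset.sum_congr rfl fun i _ => Finset.sum_comm, Finset.sum_comm]
    refine Finset.sum_congr rfl fun d _ => ?_
    simp only [Finset.sum_add_distrib, add_mul, Finset.sum_mul]
  have h3 : ∀ d ∈ Finset.Icc 1 (m - 1), ∑ i ∈ I, ∑ j ∈ I, ind (j = i + d) ≤ (N : ℝ) - 1 := by
    intro d hd
    rw [Finset.mem_Icc] at hd
    have h4 : ∀ i ∈ I, ∑ j ∈ I, ind (j = i + d) ≤ ind (i < N - 1) := by
      intro i hi
      have e0 : ∑ j ∈ I, ind (j = i + d) = if i + d ∈ I then (1 : ℝ) else 0 := by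
        rw [← Finset.sum_ite_eq' I (i + d) (fun _ => (1 : ℝ))]
        refine Finset.sum_congr rfl fun j _ => ?_
        unfold ind
        congr
      rw [e0]
      have hm' : i + d ∈ I ↔ i + d < N := by rw [hI, Finset.mem_range]
      simp only [hm']
      unfold ind
      split_ifs <;> first | omega | norm_num
    refine (Finset.sum_le_sum h4).trans ?_
    have hsub : Finset.range (N - 1) ⊆ I := by
      rw [hI]; exact Finset.range_mono (by omega)
    rw [← Finset.sum_subset hsub (fun i _ hi => by
      rw [Finset.mem_range] at hi
      simp [ind, hi])]
    have h8 : ∑ i ∈ Finset.range (N - 1), ind (i < N - 1) = ((N - 1 : ℕ) : ℝ) := by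
      rw [Finset.sum_congr rfl (g := fun _ => (1 : ℝ)) (fun i hi => by
        rw [Finset.mem_range] at hi; simp [ind, hi])]
      simp
    have h7 : ((N - 1 : ℕ) : ℝ) = (N : ℝ) - 1 := by rw [Nat.cast_sub hN]; simp
    rw [h8, h7]
  rw [h2, Finset.mul_sum]
  refine Finset.sum_le_sum fun d hd => mul_le_mul_of_nonneg_right ?_ (hQ d)
  have a1 := h3 d hd
  rw [Finset.sum_comm (f := fun i j => ind (i = j + d))]
  linarith

theorem final_arith (m n P S : ℝ) (hm : 2 ≤ m) (hn : 2 * m ≤ n) (hP : 0 ≤ P) (hS : 0 ≤ S) :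
    (n - m + 1) * (2 * m - 1) * P + 2 * (n - m + 1 - 1) * S ≤
    2 * ((2 * m * n - 3 * m ^ 2 + m) * P + (3 * m - 3 * m ^ 2 - 2 * n + 2 * m * n) * S) := by
  have h1 : (n - m + 1) * (2 * m - 1) ≤ 2 * (2 * m * n - 3 * m ^ 2 + m) := by nlinarith
  have h2 : 2 * (n - m + 1 - 1) ≤ 2 * (3 * m - 3 * m ^ 2 - 2 * n + 2 * m * n) := by
    have : 0 ≤ (m - 2) * (2 * n - 3 * m) := mul_nonneg (by linarith) (by linarith)
    nlinarith
  have := mul_le_mul_of_nonneg_right h1 hP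
  have := mul_le_mul_of_nonneg_right h2 hS
  linarith

/-- Proposition: Poisson approximation for the number of decreasing blocks of `m`
consecutive positions of a Mallows(q) permutation of `[n]`. -/
theorem stmt17 (q : ℝ) (hq : 0 < q) (n m : ℕ) (hm : 2 ≤ m) (hn : 2 * m ≤ n)
    (W : Equiv.Perm (Fin n) → ℕ)
    (hW : ∀ σ, W σ = ((Finset.range (n - m + 1)).filter fun i =>
        OccursConsec (Fin.revPerm : Equiv.Perm (Fin m)) σ i).card)
    (EW b1 b2 : ℝ)
    (hEW : EW = mallowsExp q fun σ => (W σ : ℝ))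
    (hb1 : b1 = (2 * (m : ℝ) * (n : ℝ) - 3 * (m : ℝ) ^ 2 + (m : ℝ))
        * q ^ (2 * m.choose 2) / (invPoly m q) ^ 2)
    (hb2 : b2 = (3 * (m : ℝ) - 3 * (m : ℝ) ^ 2 - 2 * (n : ℝ) + 2 * (m : ℝ) * (n : ℝ))
        * ∑ s ∈ Finset.Icc 1 (m - 1), q ^ ((2 * m - s).choose 2) / invPoly (2 * m - s) q) :
    dTVNatMallows q W EW ≤ 2 * (b1 + b2) := by

  subst hb1 hb2
  set Z := invPoly n q with hZ
  have hZ0 : 0 < Z := invPoly_pos hq n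
  set w : Equiv.Perm (Fin n) → ℝ := fun σ => q ^ invCount σ / Z with hw
  have hw0 : ∀ σ, 0 ≤ w σ := fun σ => by simp only [hw]; positivity
  have hw1 : ∑ σ, w σ = 1 := by
    simp only [hw]
    rw [← Finset.sum_div, sum_inv, div_self hZ0.ne']
  have hblock : ∀ k i : ℕ, ∀ h : i + k ≤ n, ∀ g : Equiv.Perm (Fin n) → ℝ,
      (∀ σ ρ, g (σ * act k i h ρ) = g σ) →
      ∑ σ, w σ * ind (Dec k i σ) * g σ = q ^ (k.choose 2) / invPoly k q * ∑ σ, w σ * g σ := by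
    intro k i h g hg
    have hk := invPoly_pos hq k
    have := block_main h q g hg
    have e1 : ∑ σ, w σ * ind (Dec k i σ) * g σ =
        (∑ σ, q ^ invCount σ * ind (Dec k i σ) * g σ) / Z := by
      rw [Finset.sum_div]; refine Finset.sum_congr rfl fun σ _ => ?_
      simp only [hw]; ring
    have e2 : ∑ σ, w σ * g σ = (∑ σ, q ^ invCount σ * g σ) / Z := by
      rw [Finset.sum_div]; refine Finset.sum_congr rfl fun σ _ => ?_
      simp only [hw]; ring
    rw [e1, e2]
    field_simp
    linarith
  have hprob : ∀ k i : ℕ, i + k ≤ n →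
      ∑ σ, w σ * ind (Dec k i σ) = q ^ (k.choose 2) / invPoly k q := by
    intro k i h
    have := hblock k i h (fun _ => 1) (fun _ _ => rfl)
    simpa [hw1] using this
  set I := Finset.range (n - m + 1) with hI
  set B : ℕ → Finset ℕ := fun i => I.filter (fun j => i < j + m ∧ j < i + m) with hB
  set p := q ^ (m.choose 2) / invPoly m q with hp
  have hIm := invPoly_pos hq m
  have hp0 : 0 < p := by positivity
  have hIn : ∀ i ∈ I, i + m ≤ n := fun i hi => by
    have := Finset.mem_range.1 hi; omega
  have hlam : EW = ∑ i ∈ I, p := by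
    rw [hEW]
    unfold mallowsExp
    rw [Finset.sum_congr rfl fun i hi => (hprob m i (hIn i hi)).symm, Finset.sum_comm, Finset.sum_div]
    refine Finset.sum_congr rfl fun σ _ => ?_
    rw [← Finset.mul_sum, ← card_eq_sum_ind I (fun i σ => Dec m i σ), ← hW σ]
    simp only [hw]; ring
  have hlam0 : 0 < EW := by
    rw [hlam]; exact Finset.sum_pos (fun _ _ => hp0) ⟨0, by simp [hI]⟩
  have hTV : dTVNatMallows q W EW =
      (1 / 2) * ∑' k : ℕ, |∑ σ ∈ Finset.univ.filter (fun σ => W σ = k), w σ - poissonPMF EW k| := by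
    unfold dTVNatMallows mallowsProb
    simp only [hw, Finset.sum_div, Set.mem_ofPred_eq]
    rfl
  rw [hTV]
  have hmain := tv_le w hw1 W EW hlam0 _ (fun f hf => chen_stein_core w hw0 I
    (fun i σ => Dec m i σ) B (fun i _ => Finset.filter_subset _ _)
    (fun i hi => Finset.mem_filter.2 ⟨hi, by omega, by omega⟩) (fun _ => p) (fun _ _ => hp0.le)
    (fun i hi => hprob m i (hIn i hi)) W hW
    (fun i hi g => hblock m i (hIn i hi)
      (fun σ => g (((I \ B i).filter (fun j => Dec m j σ)).card)) (by
        intro σ ρ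
        congr 2
        refine Finset.filter_congr fun j hj => ?_
        apply dec_act
        rw [Finset.mem_sdiff] at hj
        by_contra hc
        exact hj.2 (Finset.mem_filter.2 ⟨hj.1, by omega, by omega⟩)))
    EW hlam f hf)
  refine hmain.trans ?_
  set Q : ℕ → ℝ := fun d => q ^ ((m + d).choose 2) / invPoly (m + d) q with hQ
  have hQ0 : ∀ d, 0 ≤ Q d := fun d => by
    have := invPoly_pos hq (m + d)
    simp only [hQ]; positivity
  have hpair : ∀ i d, i + d ∈ I → 1 ≤ d → d < m →
      ∑ σ, w σ * (ind (Dec m i σ) * ind (Dec m (i + d) σ)) ≤ Q d := by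
    intro i d hid _ hd
    simp only [hQ]
    rw [← hprob (m + d) i (by have := hIn _ hid; omega)]
    refine Finset.sum_le_sum fun σ _ => mul_le_mul_of_nonneg_left ?_ (hw0 σ)
    by_cases h1 : Dec m i σ
    · by_cases h2 : Dec m (i + d) σ
      · have := dec_overlap hd σ h1 h2
        simp [ind, h1, h2, this]
      · simpa [ind, h2] using ind_nonneg _
    · simpa [ind, h1] using ind_nonneg _
  have hoff := off_sum (N := n - m + 1) (m := m) (by omega) I hI B (fun i => rfl)
    (fun i j => ∑ σ, w σ * (ind (Dec m i σ) * ind (Dec m j σ))) Q hQ0 hpair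
    (fun i d h1 h2 h3 => by
      have := hpair i d h1 h2 h3
      simp only [mul_comm (ind (Dec m (i + d) _))]
      exact this)
  have hcnt := pair_count (N := n - m + 1) (m := m) I hI B (fun i => rfl) (by omega)
  have hfirst : ∑ i ∈ I, ∑ j ∈ B i, p * p = (∑ i ∈ I, ((B i).card : ℝ)) * (p * p) := by
    rw [Finset.sum_mul]
    refine Finset.sum_congr rfl fun i _ => ?_
    rw [Finset.sum_const, nsmul_eq_mul]
  have hrefl : ∑ s ∈ Finset.Icc 1 (m - 1), q ^ ((2 * m - s).choose 2) / invPoly (2 * m - s) q =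
      ∑ d ∈ Finset.Icc 1 (m - 1), Q d := by
    refine Finset.sum_bij' (fun s _ => m - s) (fun d _ => m - d) ?_ ?_ ?_ ?_ ?_
    · intro s hs; rw [Finset.mem_Icc] at *; omega
    · intro s hs; rw [Finset.mem_Icc] at *; omega
    · intro s hs; rw [Finset.mem_Icc] at *; omega
    · intro s hs; rw [Finset.mem_Icc] at *; omega
    · intro s hs; rw [Finset.mem_Icc] at hs
      simp only [hQ]
      rw [show m + (m - s) = 2 * m - s by omega]
  have hN : ((n - m + 1 : ℕ) : ℝ) = (n : ℝ) - m + 1 := by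
    rw [Nat.cast_add, Nat.cast_sub (by omega)]; simp
  rw [hN] at hoff hcnt
  rw [hrefl, hfirst]
  have hpp : q ^ (2 * m.choose 2) / invPoly m q ^ 2 = p * p := by
    rw [hp, two_mul, pow_add]; field_simp
  rw [mul_div_assoc, hpp]
  have hfin := final_arith m n (p * p) (∑ d ∈ Finset.Icc 1 (m - 1), Q d)
    (by exact_mod_cast hm) (by exact_mod_cast hn) (by positivity)
    (Finset.sum_nonneg fun d _ => hQ0 d)
  have h7 := mul_le_mul_of_nonneg_right hcnt (mul_nonneg hp0.le hp0.le)
  exact (add_le_add h7 hoff).trans hfin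

end
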